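/- Let β ∈ (1,2], L > 0, and let f₀ be a continuous log-concave density on ℝ whose score ψ₀ satisfies |ψ₀(x) − ψ₀(y)| ≤ L|x−y|^{β−1} for all x, y. Then for every u ∈ (0,1), the density quantile derivative satisfies |J₀'(u)| ≤ 2·L^{1/β}·max{1, log(C_β / min{u, 1−u})}^{(β−1)/β}, where C_β := √(2·β^{1/(β−1)}·(β−1)/π) and J₀' = ψ₀ ∘ F₀⁻¹. -/

import Mathlib

open MeasureTheory Real

/-!
Log-concavity says that `log f₀` lies below its tangents: `f₀ y ≤ f₀ x * exp (ψ₀ x * (y - x))`.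
Fix `x` with `s = ψ₀ x > 0`. Integrating the tangent at `x` over `(-∞, x]` gives `F₀ x ≤ f₀ x / s`.
Read at `y` instead, the same inequality makes `f₀` grow at least like
`f₀ x * exp (c * (y - x))` as long as the score stays above `c`. By the Hölder condition, with
`c = s * (β - 1) / β`, it does so up to distance `T = (s / (β * L)) ^ (1 / (β - 1))`. As the total
mass is one, `f₀ x * (exp (c * T) - 1) ≤ c`, so `F₀ x` is exponentially small in `c * T`, which
Bernoulli's inequality bounds below by `(s / (2 * L ^ (1 / β))) ^ (β / (β - 1))`. Solving for `s`
gives the bound, and reflecting the line covers negative scores.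
-/

lemma concaveOn_log_of_rpow_mul_rpow_le {E : Type*} [AddCommGroup E] [Module ℝ E] {f : E → ℝ}
    (hf : ∀ x y : E, ∀ t ∈ Set.Icc (0 : ℝ) 1,
      f x ^ t * f y ^ (1 - t) ≤ f (t • x + (1 - t) • y)) :
    ConcaveOn ℝ {x | 0 < f x} (fun x ↦ log (f x)) := by
  have hpos {x y : E} (hx : 0 < f x) (hy : 0 < f y) (t : ℝ) : 0 < f x ^ t * f y ^ (1 - t) := by
    positivity
  refine ⟨fun x hx y hy a b ha hb hab ↦ ?_, fun x hx y hy a b ha hb hab ↦ ?_⟩ <;>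
    obtain rfl : b = 1 - a := by linarith
  · exact (hpos hx hy a).trans_le (hf x y a ⟨ha, by linarith⟩)
  · rw [Set.mem_ofPred_eq] at hx hy
    have hlog := log_le_log (hpos hx hy a) (hf x y a ⟨ha, by linarith⟩)
    rwa [log_mul (by positivity) (by positivity), log_rpow hx, log_rpow hy] at hlog

lemma add_mul_sub_le_of_convexOn_of_hasDerivWithinAt_Ioi {S : Set ℝ} {φ : ℝ → ℝ} {φ' x y : ℝ}
    (hφ : ConvexOn ℝ S φ) (hx : x ∈ interior S) (hy : y ∈ S)
    (hφ' : HasDerivWithinAt φ φ' (Set.Ioi x) x) :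
    φ x + φ' * (y - x) ≤ φ y := by
  rcases lt_trichotomy y x with hyx | rfl | hxy
  · have hslope : slope φ y x ≤ φ' := by
      rw [← hφ'.derivWithin (uniqueDiffWithinAt_Ioi x)]
      exact (hφ.slope_le_leftDeriv_of_mem_interior hy hx hyx).trans
        (hφ.leftDeriv_le_rightDeriv_of_mem_interior hx)
    rw [slope_def_field, div_le_iff₀ (by linarith)] at hslope
    linarith
  · simp
  · have hslope := hφ.le_slope_of_hasDerivWithinAt_Ioi (interior_subset hx) hy hxy hφ'
    rw [slope_def_field, le_div_iff₀ (by linarith)] at hslope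
    linarith

/-- `ψ` is a supergradient of `log f` on the support of `f`: this is what the score of a
log-concave density satisfies. The inequality `log f y ≤ log f x + ψ x * (y - x)` is exponentiated
so that it remains meaningful where `f y = 0`. -/
def IsLogSupergradient (f ψ : ℝ → ℝ) : Prop :=
  ∀ ⦃x⦄, 0 < f x → ∀ y, f y ≤ f x * exp (ψ x * (y - x))

lemma isLogSupergradient_of_rpow_mul_rpow_le {f ψ : ℝ → ℝ} (hcont : Continuous f)
    (hf : ∀ x y : ℝ, ∀ t ∈ Set.Icc (0 : ℝ) 1,
      f x ^ t * f y ^ (1 - t) ≤ f (t * x + (1 - t) * y))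
    (hψ : ∀ x, 0 < f x → HasDerivWithinAt (fun t ↦ log (f t)) (ψ x) (Set.Ioi x) x) :
    IsLogSupergradient f ψ := by
  intro x hx y
  rcases le_or_gt (f y) 0 with hy | hy
  · exact hy.trans (by positivity)
  have hx_int : x ∈ interior {x | 0 < f x} := by
    rwa [(isOpen_lt continuous_const hcont).interior_eq]
  have htangent := add_mul_sub_le_of_convexOn_of_hasDerivWithinAt_Ioi
    (concaveOn_log_of_rpow_mul_rpow_le hf).neg hx_int hy (hψ x hx).neg
  simp only [Pi.neg_apply] at htangent
  rw [← log_le_log_iff hy (by positivity), log_mul hx.ne' (exp_ne_zero _), log_exp]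
  linarith

lemma continuous_of_dist_le_mul_rpow {X Y : Type*} [PseudoMetricSpace X] [PseudoMetricSpace Y]
    {g : X → Y} {L r : ℝ} (hr : 0 < r) (hg : ∀ x y, dist (g x) (g y) ≤ L * dist x y ^ r) :
    Continuous g := by
  refine continuous_iff_continuousAt.2 fun x ↦ tendsto_iff_dist_tendsto_zero.2 ?_
  have hbound : Filter.Tendsto (fun y ↦ L * dist y x ^ r) (nhds x) (nhds 0) := by
    have hcont : Continuous fun y ↦ L * dist y x ^ r :=
      continuous_const.mul (Continuous.rpow_const (by fun_prop) fun _ ↦ .inr hr.le)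
    simpa [zero_rpow hr.ne'] using hcont.tendsto x
  exact squeeze_zero (fun _ ↦ dist_nonneg) (fun y ↦ hg y x) hbound

lemma mul_exp_sub_one_div_le_integral {f : ℝ → ℝ} {a c x T : ℝ} (hf_int : Integrable f)
    (hf_nonneg : 0 ≤ f) (hc : c ≠ 0) (hT : 0 ≤ T)
    (hle : ∀ y ∈ Set.Icc x (x + T), a * exp (c * (y - x)) ≤ f y) :
    a * ((exp (c * T) - 1) / c) ≤ ∫ y, f y := by
  have hxT : x ≤ x + T := by linarith
  calc a * ((exp (c * T) - 1) / c) = ∫ y in x..x + T, a * exp (c * (y - x)) := by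
        rw [intervalIntegral.integral_const_mul,
          intervalIntegral.integral_comp_sub_right (fun y ↦ exp (c * y)) x,
          intervalIntegral.integral_comp_mul_left (fun y ↦ exp y) hc, integral_exp]
        simp [div_eq_inv_mul]
    _ ≤ ∫ y in x..x + T, f y :=
        intervalIntegral.integral_mono_on hxT (Continuous.intervalIntegrable (by fun_prop) _ _)
          hf_int.intervalIntegrable hle
    _ ≤ ∫ y, f y := by
        rw [intervalIntegral.integral_of_le hxT]
        exact setIntegral_le_integral hf_int (.of_forall hf_nonneg)

section Constants

variable {β : ℝ}

lemma rpow_div_sub_one_le_mul_two_rpow (hβ : 1 < β) :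
    β ^ (β / (β - 1)) ≤ (β - 1) * 2 ^ (β / (β - 1)) := by
  have hβ' : 0 < β - 1 := by linarith
  have hbernoulli := one_add_mul_self_le_rpow_one_add (s := 2 / β - 1)
    (by linarith [show 0 < 2 / β by positivity]) (p := β / (β - 1))
    (by rw [le_div_iff₀ hβ']; linarith)
  rw [show 1 + β / (β - 1) * (2 / β - 1) = 1 / (β - 1) by field_simp; ring,
    add_sub_cancel, div_rpow zero_le_two (by linarith), div_le_div_iff₀ hβ' (by positivity)]
    at hbernoulli
  linarith

lemma div_two_mul_rpow_le_mul_rpow {L s : ℝ} (hβ : 1 < β) (hL : 0 < L) (hs : 0 < s) :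
    (s / (2 * L ^ (1 / β))) ^ (β / (β - 1)) ≤
      s * (β - 1) / β * (s / (β * L)) ^ (1 / (β - 1)) := by
  have hβ' : 0 < β - 1 := by linarith
  have hβ₀ : 0 < β := by linarith
  have hL_pow : (L ^ (1 / β)) ^ (β / (β - 1)) = L ^ (1 / (β - 1)) := by
    rw [← rpow_mul hL.le]
    congr 1
    field_simp
  have hs_pow : (s / β) ^ (β / (β - 1)) = s / β * (s / β) ^ (1 / (β - 1)) := by
    rw [← rpow_one_add' (by positivity) (by positivity)]
    congr 1
    field_simp
    ring
  calc (s / (2 * L ^ (1 / β))) ^ (β / (β - 1))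
      = β ^ (β / (β - 1)) / 2 ^ (β / (β - 1)) * (s / β) ^ (β / (β - 1)) / L ^ (1 / (β - 1)) := by
        rw [← div_rpow hβ₀.le zero_le_two, ← mul_rpow (by positivity) (by positivity), ← hL_pow,
          ← div_rpow (by positivity) (by positivity)]
        congr 1
        field_simp
    _ ≤ (β - 1) * (s / β) ^ (β / (β - 1)) / L ^ (1 / (β - 1)) := by
        gcongr
        exact div_le_of_le_mul₀ (by positivity) hβ'.le (rpow_div_sub_one_le_mul_two_rpow hβ)
    _ = s * (β - 1) / β * (s / (β * L)) ^ (1 / (β - 1)) := by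
        rw [hs_pow, ← div_div, div_rpow (by positivity) hL.le]
        ring

lemma two_le_rpow_one_div_sub_one (hβ : β ∈ Set.Ioc 1 2) : 2 ≤ β ^ (1 / (β - 1)) := by
  have hβ' : 0 < β - 1 := by linarith [hβ.1]
  have hbernoulli := one_add_mul_self_le_rpow_one_add (s := β - 1) (by linarith)
    (p := 1 / (β - 1)) (by rw [le_div_iff₀ hβ']; linarith [hβ.2])
  rw [one_div_mul_cancel hβ'.ne', add_sub_cancel] at hbernoulli
  linarith

lemma two_mul_sub_one_div_le_sqrt (hβ : β ∈ Set.Ioc 1 2) :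
    2 * ((β - 1) / β) ≤ √(2 * β ^ (1 / (β - 1)) * (β - 1) / π) := by
  have hβ' : 0 < β - 1 := by linarith [hβ.1]
  have hβ₀ : 0 < β := by linarith
  apply le_sqrt_of_sq_le
  calc (2 * ((β - 1) / β)) ^ 2 = 4 * (β - 1) / β ^ 2 * (β - 1) := by ring
    _ ≤ 1 * (β - 1) := by
        gcongr
        exact div_le_one_of_le₀ (by linarith [sq_nonneg (β - 2)]) (by positivity)
    _ ≤ 2 * 2 / π * (β - 1) := by
        gcongr
        rw [le_div_iff₀ pi_pos]
        linarith [pi_le_four]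
    _ ≤ 2 * β ^ (1 / (β - 1)) / π * (β - 1) := by
        gcongr
        exact two_le_rpow_one_div_sub_one hβ
    _ = 2 * β ^ (1 / (β - 1)) * (β - 1) / π := by ring

end Constants

lemma le_max_one_log_rpow_inv {a m p C : ℝ} (ha : 0 ≤ a) (hm : 0 < m) (hp : 0 < p)
    (h : 1 ≤ a → m * exp (a ^ p) ≤ C) : a ≤ max 1 (log (C / m)) ^ p⁻¹ := by
  rw [le_rpow_inv_iff_of_pos ha (by positivity) hp]
  rcases le_total a 1 with ha₁ | ha₁
  · exact (rpow_le_one ha ha₁ hp.le).trans (le_max_left _ _)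
  · have hexp : exp (a ^ p) ≤ C / m := by
      rw [le_div_iff₀ hm]
      linarith [h ha₁]
    exact ((le_log_iff_exp_le ((exp_pos _).trans_le hexp)).2 hexp).trans (le_max_right _ _)

lemma mul_sub_one_div_le_of_mem_Icc {ψ : ℝ → ℝ} {β L x y : ℝ} (hβ : 1 < β) (hL : 0 < L)
    (hx : 0 ≤ ψ x) (hψ : |ψ x - ψ y| ≤ L * |x - y| ^ (β - 1))
    (hy : y ∈ Set.Icc x (x + (ψ x / (β * L)) ^ (1 / (β - 1)))) :
    ψ x * (β - 1) / β ≤ ψ y := by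
  have hβ' : 0 < β - 1 := by linarith
  have hvar : ψ x - ψ y ≤ ψ x / β :=
    calc ψ x - ψ y ≤ L * |x - y| ^ (β - 1) := (le_abs_self _).trans hψ
      _ ≤ L * ((ψ x / (β * L)) ^ (1 / (β - 1))) ^ (β - 1) := by
          gcongr
          rw [abs_sub_comm, abs_of_nonneg (by linarith [hy.1])]
          linarith [hy.2]
      _ = ψ x / β := by
          rw [one_div, rpow_inv_rpow (by positivity) hβ'.ne']
          field_simp
  calc ψ x * (β - 1) / β = ψ x - ψ x / β := by field_simp
    _ ≤ ψ y := by linarith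

namespace IsLogSupergradient

variable {f ψ : ℝ → ℝ}

lemma comp_neg (h : IsLogSupergradient f ψ) :
    IsLogSupergradient (fun x ↦ f (-x)) (fun x ↦ -ψ (-x)) := by
  intro x hx y
  convert h hx (-y) using 3
  ring

lemma pos (h : IsLogSupergradient f ψ) (hf : Continuous f) (hψ : Continuous ψ) {x₀ : ℝ}
    (hx₀ : 0 < f x₀) (x : ℝ) : 0 < f x := by
  -- Near an endpoint of the support the score would blow up, so the support is closed.
  have hsupport : {x | 0 < f x} = {x | f x₀ * exp (ψ x * (x - x₀)) ≤ f x} := by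
    ext x
    refine ⟨fun hx ↦ ?_, (mul_pos hx₀ (exp_pos _)).trans_le⟩
    calc f x₀ * exp (ψ x * (x - x₀))
        ≤ f x * exp (ψ x * (x₀ - x)) * exp (ψ x * (x - x₀)) := by
          gcongr
          exact h hx x₀
      _ = f x := by
          rw [mul_assoc, ← exp_add, ← mul_add]
          simp
  have hclosed : IsClosed {x | 0 < f x} := by
    rw [hsupport]
    exact isClosed_le (by fun_prop) hf
  have huniv : {x | 0 < f x} = Set.univ :=
    IsClopen.eq_univ ⟨hclosed, isOpen_lt continuous_const hf⟩ ⟨x₀, hx₀⟩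
  exact Set.eq_univ_iff_forall.1 huniv x

lemma mul_exp_le {c x y : ℝ} (h : IsLogSupergradient f ψ) (hy : 0 < f y) (hxy : x ≤ y)
    (hc : c ≤ ψ y) : f x * exp (c * (y - x)) ≤ f y := by
  have hslope : c * (y - x) ≤ ψ y * (y - x) := mul_le_mul_of_nonneg_right hc (sub_nonneg.2 hxy)
  calc f x * exp (c * (y - x)) ≤ f y * exp (ψ y * (x - y)) * exp (c * (y - x)) := by
        gcongr
        exact h hy x
    _ ≤ f y * 1 := by
        rw [mul_assoc, ← exp_add]
        gcongr
        exact exp_le_one_iff.2 (by linarith)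
    _ = f y := mul_one _

lemma integral_Iic_le {x : ℝ} (h : IsLogSupergradient f ψ) (hx : 0 < f x) (hψ : 0 < ψ x)
    (hf_int : IntegrableOn f (Set.Iic x)) : ∫ t in Set.Iic x, f t ≤ f x / ψ x := by
  calc ∫ t in Set.Iic x, f t
      ≤ ∫ t in Set.Iic x, f x * exp (-(ψ x * x)) * exp (ψ x * t) := by
        refine integral_mono hf_int ((integrableOn_exp_mul_Iic hψ x).const_mul _) fun t ↦ ?_
        change f t ≤ _
        rw [mul_assoc, ← exp_add]
        convert h hx t using 3
        ring
    _ = f x / ψ x := by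
        rw [integral_const_mul, integral_exp_mul_Iic hψ, mul_div_assoc', mul_assoc, ← exp_add,
          neg_add_cancel, exp_zero, mul_one]

lemma integral_Iic_mul_exp_sub_one_le {c x T : ℝ} (h : IsLogSupergradient f ψ)
    (hpos : ∀ y, 0 < f y) (hf_int : Integrable f) (hc : 0 < c) (hT : 0 ≤ T)
    (hψ : ∀ y ∈ Set.Icc x (x + T), c ≤ ψ y) :
    (∫ t in Set.Iic x, f t) * (exp (c * T) - 1) ≤ c / ψ x * ∫ t, f t := by
  have hψx : 0 < ψ x := hc.trans_le (hψ x ⟨le_rfl, by linarith⟩)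
  have hexp : 0 ≤ exp (c * T) - 1 := sub_nonneg.2 (one_le_exp (by positivity))
  have hmass : f x * ((exp (c * T) - 1) / c) ≤ ∫ t, f t :=
    mul_exp_sub_one_div_le_integral hf_int (fun y ↦ (hpos y).le) hc.ne' hT fun y hy ↦
      h.mul_exp_le (hpos y) hy.1 (hψ y hy)
  calc (∫ t in Set.Iic x, f t) * (exp (c * T) - 1) ≤ f x / ψ x * (exp (c * T) - 1) := by
        gcongr
        exact h.integral_Iic_le (hpos x) hψx hf_int.integrableOn
    _ = c / ψ x * (f x * ((exp (c * T) - 1) / c)) := by field_simp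
    _ ≤ c / ψ x * ∫ t, f t := by gcongr

section Holder

variable {β L x : ℝ}

lemma integral_Iic_mul_exp_le (h : IsLogSupergradient f ψ) (hpos : ∀ y, 0 < f y)
    (hf_int : Integrable f) (hβ : 1 < β) (hL : 0 < L)
    (hψ : ∀ y, |ψ x - ψ y| ≤ L * |x - y| ^ (β - 1)) (hx : 2 * L ^ (1 / β) ≤ ψ x) :
    (∫ t in Set.Iic x, f t) * exp ((ψ x / (2 * L ^ (1 / β))) ^ (β / (β - 1))) ≤
      2 * ((β - 1) / β) * ∫ t, f t := by
  have hβ' : 0 < β - 1 := by linarith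
  have hψx : 0 < ψ x := lt_of_lt_of_le (by positivity) hx
  set w := (ψ x / (2 * L ^ (1 / β))) ^ (β / (β - 1))
  set c := ψ x * (β - 1) / β with hc
  set T := (ψ x / (β * L)) ^ (1 / (β - 1))
  have hscore : ∀ y ∈ Set.Icc x (x + T), c ≤ ψ y := fun y hy ↦
    mul_sub_one_div_le_of_mem_Icc hβ hL hψx.le (hψ y) hy
  have hw : 1 ≤ w :=
    one_le_rpow (by rwa [le_div_iff₀ (by positivity), one_mul]) (by positivity)
  have hwcT : w ≤ c * T := div_two_mul_rpow_le_mul_rpow hβ hL hψx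
  have hexp : exp w ≤ 2 * (exp (c * T) - 1) := by
    linarith [exp_le_exp.2 hwcT, add_one_le_exp (c * T)]
  have hF : 0 ≤ ∫ t in Set.Iic x, f t := integral_nonneg fun t ↦ (hpos t).le
  calc (∫ t in Set.Iic x, f t) * exp w
      ≤ (∫ t in Set.Iic x, f t) * (2 * (exp (c * T) - 1)) := by gcongr
    _ = 2 * ((∫ t in Set.Iic x, f t) * (exp (c * T) - 1)) := by ring
    _ ≤ 2 * (c / ψ x * ∫ t, f t) := by
        refine mul_le_mul_of_nonneg_left ?_ zero_le_two
        exact h.integral_Iic_mul_exp_sub_one_le hpos hf_int (by positivity) (by positivity) hscore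
    _ = 2 * ((β - 1) / β) * ∫ t, f t := by
        rw [hc]
        field_simp

lemma integral_Ioi_mul_exp_le (h : IsLogSupergradient f ψ) (hpos : ∀ y, 0 < f y)
    (hf_int : Integrable f) (hβ : 1 < β) (hL : 0 < L)
    (hψ : ∀ y, |ψ x - ψ y| ≤ L * |x - y| ^ (β - 1)) (hx : 2 * L ^ (1 / β) ≤ -ψ x) :
    (∫ t in Set.Ioi x, f t) * exp ((-ψ x / (2 * L ^ (1 / β))) ^ (β / (β - 1))) ≤
      2 * ((β - 1) / β) * ∫ t, f t := by
  have hψ_neg (y : ℝ) : |-ψ (- -x) - -ψ (-y)| ≤ L * |-x - y| ^ (β - 1) := by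
    convert hψ (-y) using 1
    · rw [neg_neg, ← abs_neg]
      ring_nf
    · rw [← abs_neg]
      ring_nf
  have hreflected := h.comp_neg.integral_Iic_mul_exp_le (fun y ↦ hpos (-y)) hf_int.comp_neg hβ hL
    hψ_neg (by rwa [neg_neg])
  simpa only [neg_neg, integral_comp_neg_Iic, integral_neg_eq_self] using hreflected

lemma min_integral_Iic_Ioi_mul_exp_le (h : IsLogSupergradient f ψ) (hpos : ∀ y, 0 < f y)
    (hf_int : Integrable f) (hβ : 1 < β) (hL : 0 < L)
    (hψ : ∀ y, |ψ x - ψ y| ≤ L * |x - y| ^ (β - 1)) (hx : 2 * L ^ (1 / β) ≤ |ψ x|) :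
    min (∫ t in Set.Iic x, f t) (∫ t in Set.Ioi x, f t) *
        exp ((|ψ x| / (2 * L ^ (1 / β))) ^ (β / (β - 1))) ≤
      2 * ((β - 1) / β) * ∫ t, f t := by
  rcases abs_cases (ψ x) with ⟨habs, -⟩ | ⟨habs, -⟩ <;> rw [habs] at hx ⊢
  · refine le_trans ?_ (h.integral_Iic_mul_exp_le hpos hf_int hβ hL hψ hx)
    gcongr
    exact min_le_left _ _
  · refine le_trans ?_ (h.integral_Ioi_mul_exp_le hpos hf_int hβ hL hψ hx)
    gcongr
    exact min_le_right _ _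

end Holder

end IsLogSupergradient

/-- If `f₀` is a continuous log-concave density on `ℝ` whose score `ψ₀` is `(β−1, L)`-Hölder
with `β ∈ (1,2]`, then for every `u ∈ (0,1)` the density quantile derivative satisfies
`|J₀'(u)| ≤ 2 L^{1/β} log₊^{(β−1)/β}(C_β / (u ∧ (1−u)))`, where
`C_β = √(2 β^{1/(β−1)} (β−1)/π)` and `J₀' = ψ₀ ∘ F₀⁻¹`. -/
theorem density_quantile_deriv_holder_bound
    (β L : ℝ) (hβ : β ∈ Set.Ioc (1:ℝ) 2) (hL : 0 < L)
    (f₀ : ℝ → ℝ) (hcont : Continuous f₀)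
    (hf_nonneg : ∀ x, 0 ≤ f₀ x) (hf_int : Integrable f₀ volume) (hf_mass : ∫ x, f₀ x = 1)
    (hlogconc : ∀ x y : ℝ, ∀ t ∈ Set.Icc (0:ℝ) 1,
      f₀ x ^ t * f₀ y ^ (1 - t) ≤ f₀ (t * x + (1 - t) * y))
    (Finv : ℝ → ℝ) (hFinv : ∀ u ∈ Set.Ioo (0:ℝ) 1, (∫ t in Set.Iic (Finv u), f₀ t) = u)
    (ψ₀ : ℝ → ℝ)
    (hψ : ∀ x : ℝ, 0 < f₀ x →
      HasDerivWithinAt (fun t => Real.log (f₀ t)) (ψ₀ x) (Set.Ici x) x)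
    (hholder : ∀ x y : ℝ, |ψ₀ x - ψ₀ y| ≤ L * |x - y| ^ (β - 1))
    (Cβ : ℝ) (hCβ : Cβ = Real.sqrt (2 * β ^ (1 / (β - 1)) * (β - 1) / Real.pi)) :
    ∀ u ∈ Set.Ioo (0:ℝ) 1,
      |ψ₀ (Finv u)| ≤
        2 * L ^ (1 / β) * (max 1 (Real.log (Cβ / min u (1 - u)))) ^ ((β - 1) / β) := by
  have hβ₁ : 1 < β := hβ.1
  have hβ' : 0 < β - 1 := sub_pos.2 hβ₁
  have hsup : IsLogSupergradient f₀ ψ₀ := isLogSupergradient_of_rpow_mul_rpow_le hcont hlogconc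
    fun x hx ↦ (hψ x hx).mono Set.Ioi_subset_Ici_self
  obtain ⟨x₀, hx₀⟩ : ∃ x₀, 0 < f₀ x₀ := by
    by_contra! hf_nonpos
    linarith [integral_nonpos (μ := volume) hf_nonpos]
  have hpos := hsup.pos hcont (continuous_of_dist_le_mul_rpow hβ' hholder) hx₀
  intro u hu
  have hupper : ∫ t in Set.Ioi (Finv u), f₀ t = 1 - u := by
    linarith [hFinv u hu, intervalIntegral.integral_Iic_add_Ioi (b := Finv u)
      hf_int.integrableOn hf_int.integrableOn]
  have hbound := le_max_one_log_rpow_inv (a := |ψ₀ (Finv u)| / (2 * L ^ (1 / β)))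
    (m := min u (1 - u)) (p := β / (β - 1)) (C := Cβ) (by positivity)
    (lt_min hu.1 (sub_pos.2 hu.2)) (by positivity) fun hlarge ↦ by
      have htail := hsup.min_integral_Iic_Ioi_mul_exp_le hpos hf_int hβ₁ hL (hholder (Finv u))
        ((one_le_div (by positivity)).1 hlarge)
      rw [hFinv u hu, hupper, hf_mass, mul_one] at htail
      exact htail.trans (hCβ ▸ two_mul_sub_one_div_le_sqrt hβ)
  rwa [inv_div, div_le_iff₀' (by positivity)] at hbound
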